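/- Let Λ = KQ/⟨all paths of length L+1⟩ be a truncated path algebra over an algebraically closed field K and d a dimension vector. Then for every realizable semisimple sequence S of dimension vector d, the subvariety Rep S of Rep_d(Λ) is irreducible. Moreover, every irreducible component of Rep_d(Λ) equals the Zariski closure of Rep S for some realizable S ∈ Seq(d). -/

import Mathlib

open Finset

/-! # Varieties of representations of a quiver with relations: basic setup -/

/-- The Zariski topology on the affine space `ι → K`: it is generated by the basic open
sets `D(p) = {x | p(x) ≠ 0}`, where `p` ranges over multivariate polynomials. -/
def zariskiTopology (ι K : Type) [CommSemiring K] : TopologicalSpace (ι → K) :=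
  TopologicalSpace.generateFrom
    {U | ∃ p : MvPolynomial ι K, U = {x | MvPolynomial.eval x p ≠ 0}}

/-- A finite quiver `Q`: vertices `Fin n`, arrows `Fin numArrows` with source and
target maps. -/
structure QuiverData where
  n : ℕ
  numArrows : ℕ
  src : Fin numArrows → Fin n
  tgt : Fin numArrows → Fin n

namespace QuiverData

variable (Q : QuiverData) (d : Fin Q.n → ℕ) (K : Type) [Field K]

/-- Index of the coordinates of the affine space of `d`-dimensional representations:
for each arrow `a` a matrix entry index in `Fin (d (tgt a)) × Fin (d (src a))`. -/
abbrev Coords := Σ a : Fin Q.numArrows, Fin (d (Q.tgt a)) × Fin (d (Q.src a))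

/-- The affine space of `d`-dimensional representations of `Q`:
a point `x` assigns to each arrow `a` a `d (tgt a) × d (src a)` matrix over `K`. -/
abbrev RepSpace := Coords Q d → K

/-- `RepSpace` carries the Zariski topology. -/
noncomputable instance instRepTop : TopologicalSpace (RepSpace Q d K) :=
  zariskiTopology (Coords Q d) K

/-- The underlying `K`-vector space `⊕ᵢ K^{dᵢ}` of any `d`-dimensional representation. -/
abbrev Carrier := (Σ i : Fin Q.n, Fin (d i)) → K

/-- The projection onto the component of the `i`-th vertex (action of the primitive
idempotent `eᵢ`). -/
def proj (i : Fin Q.n) : Carrier Q d K →ₗ[K] Carrier Q d K where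
  toFun m := fun jv => if jv.1 = i then m jv else 0
  map_add' u v := by
    funext jv; by_cases h : jv.1 = i <;> simp [h]
  map_smul' c u := by
    funext jv; by_cases h : jv.1 = i <;> simp [h]

/-- The action of the arrow `a` on the carrier space of the representation `x`. -/
noncomputable def arrowMap (x : RepSpace Q d K) (a : Fin Q.numArrows) :
    Carrier Q d K →ₗ[K] Carrier Q d K where
  toFun m := fun jv =>
    if h : jv.1 = Q.tgt a then
      ∑ w : Fin (d (Q.src a)), x ⟨a, (Fin.cast (congrArg d h) jv.2, w)⟩ * m ⟨Q.src a, w⟩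
    else 0
  map_add' u v := by
    funext jv
    by_cases h : jv.1 = Q.tgt a <;> simp [h, mul_add, Finset.sum_add_distrib]
  map_smul' c u := by
    funext jv
    by_cases h : jv.1 = Q.tgt a <;>
      simp [h, Finset.mul_sum, mul_comm, mul_left_comm, mul_assoc]

/-- The action of a word `w = [a_k, …, a_1]` of arrows on the representation `x`
(the arrow `a_1` acts first; non-composable words act as `0`). -/
noncomputable def wordMap (x : RepSpace Q d K) (w : List (Fin Q.numArrows)) :
    Module.End K (Carrier Q d K) :=
  (w.map fun a => (arrowMap Q d K x a : Module.End K (Carrier Q d K))).prod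

/-- The submodule `J^l · M_x` of the module `M_x`: the sum of the images of all words of
arrows of length `l` (for an admissible ideal, the radical acts through the arrows). -/
noncomputable def radPow (x : RepSpace Q d K) (l : ℕ) : Submodule K (Carrier Q d K) :=
  ⨆ w : {w : List (Fin Q.numArrows) // w.length = l},
    LinearMap.range (wordMap Q d K x w.1)

/-- The socle series of `M_x`: `socPow x l = soc_l(M_x)`. -/
noncomputable def socPow (x : RepSpace Q d K) : ℕ → Submodule K (Carrier Q d K)
  | 0 => ⨅ a, LinearMap.ker (arrowMap Q d K x a)
  | (l+1) => ⨅ a, (socPow x l).comap (arrowMap Q d K x a)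

/-- The dimension, at the vertex `i`, of a (vertex-graded) subspace `N`. -/
noncomputable def vdim (N : Submodule K (Carrier Q d K)) (i : Fin Q.n) : ℕ :=
  Module.finrank K (N.map (proj Q d K i))

/-- The radical layering `S(M_x) = (M/JM, JM/J²M, …, J^L M/J^{L+1} M)` of the module `M_x`,
recorded through the dimension vectors of its semisimple layers. -/
noncomputable def radLayering (L : ℕ) (x : RepSpace Q d K) :
    Fin (L+1) → Fin Q.n → ℕ :=
  fun l i => vdim Q d K (radPow Q d K x l) i - vdim Q d K (radPow Q d K x (l+1)) i

/-- The socle layering `S*(M_x) = (soc₀M, soc₁M/soc₀M, …)` of the module `M_x`, recorded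
through the dimension vectors of its semisimple layers. -/
noncomputable def socLayering (L : ℕ) (x : RepSpace Q d K) :
    Fin (L+1) → Fin Q.n → ℕ :=
  fun l i => vdim Q d K (socPow Q d K x l) i -
    (if (l : ℕ) = 0 then 0 else vdim Q d K (socPow Q d K x ((l : ℕ) - 1)) i)

end QuiverData

/-- The dominance order on semisimple sequences (recorded as sequences of dimension
vectors): `dominates S S'` means `S ≤ S'`, i.e. `⊕_{j≤l} S_j ⊆ ⊕_{j≤l} S'_j` for all `l`. -/
def dominates {n L : ℕ} (S S' : Fin (L+1) → Fin n → ℕ) : Prop :=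
  ∀ (l : Fin (L+1)) (i : Fin n),
    ∑ j ∈ Finset.univ.filter (fun j => j ≤ l), S j i ≤
      ∑ j ∈ Finset.univ.filter (fun j => j ≤ l), S' j i

/-- A semisimple sequence has dimension vector `d` if its layers' dimension vectors sum
to `d`. -/
def hasDimVec {n L : ℕ} (S : Fin (L+1) → Fin n → ℕ) (d : Fin n → ℕ) : Prop :=
  ∀ i, ∑ l, S l i = d i

namespace QuiverData

variable (Q : QuiverData) (d : Fin Q.n → ℕ) (K : Type) [Field K]

/-- Evaluation of a formal noncommutative polynomial in the vertices (`Sum.inl`) and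
arrows (`Sum.inr`) of `Q` on the representation `x`; an element of the path algebra `KQ`
is represented by such a polynomial. -/
noncomputable def evalRel (x : RepSpace Q d K) :
    FreeAlgebra K (Fin Q.n ⊕ Fin Q.numArrows) →ₐ[K] Module.End K (Carrier Q d K) :=
  FreeAlgebra.lift K
    (Sum.elim (fun i => (proj Q d K i : Module.End K (Carrier Q d K)))
      (fun a => (arrowMap Q d K x a : Module.End K (Carrier Q d K))))

/-- The affine variety `Rep_d(Λ)` for `Λ = KQ/I`, where the ideal `I` is generated by the
set `R` of relations: the set of points of `RepSpace` annihilating every relation. -/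
def RepVar (R : Set (FreeAlgebra K (Fin Q.n ⊕ Fin Q.numArrows))) :
    Set (RepSpace Q d K) :=
  {x | ∀ r ∈ R, evalRel Q d K x r = 0}

/-- The affine variety `Rep_d(Λ)` for the truncated path algebra
`Λ = KQ/⟨all paths of length L+1⟩`. -/
def TruncRepVar (L : ℕ) : Set (RepSpace Q d K) :=
  {x | ∀ w : List (Fin Q.numArrows), w.length = L + 1 → wordMap Q d K x w = 0}

/-- A submodule of `M_x`, i.e. a subspace stable under the arrows and the vertex
idempotents. -/
def Stable (x : RepSpace Q d K) (N : Submodule K (Carrier Q d K)) : Prop :=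
  (∀ a, N.map (arrowMap Q d K x a) ≤ N) ∧ ∀ i, N.map (proj Q d K i) ≤ N

/-- A submodule `N` of `M_x` is indecomposable (as a module). -/
def IndecompSub (x : RepSpace Q d K) (N : Submodule K (Carrier Q d K)) : Prop :=
  N ≠ ⊥ ∧ ∀ N₁ N₂ : Submodule K (Carrier Q d K),
    Stable Q d K x N₁ → Stable Q d K x N₂ → N₁ ≤ N → N₂ ≤ N →
    N₁ ⊔ N₂ = N → N₁ ⊓ N₂ = ⊥ → N₁ = ⊥ ∨ N₂ = ⊥

/-- The module `M_x` is indecomposable. -/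
def IndecompRep (x : RepSpace Q d K) : Prop :=
  IndecompSub Q d K x ⊤

/-- The module `M_x` is uniserial: its submodules form a chain. -/
def UniserialRep (x : RepSpace Q d K) : Prop :=
  ∀ N₁ N₂ : Submodule K (Carrier Q d K),
    Stable Q d K x N₁ → Stable Q d K x N₂ → N₁ ≤ N₂ ∨ N₂ ≤ N₁

/-- `M_x` decomposes as a direct sum of `s` indecomposable submodules whose dimension
vectors are `D 0, …, D (s-1)`. -/
def DecompWith (x : RepSpace Q d K) (s : ℕ) (D : Fin s → Fin Q.n → ℕ) : Prop :=
  ∃ N : Fin s → Submodule K (Carrier Q d K),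
    (∀ r, Stable Q d K x (N r)) ∧
    (∀ r, Disjoint (N r) (⨆ t, ⨆ (_ : t ≠ r), N t)) ∧
    (⨆ r, N r) = ⊤ ∧
    (∀ r, IndecompSub Q d K x (N r)) ∧
    ∀ r i, vdim Q d K (N r) i = D r i

/-- A homomorphism of representations `M_x → M_y` (for possibly different dimension
vectors): a linear map commuting with the arrow actions and the vertex projections. -/
def RepHom (dx dy : Fin Q.n → ℕ) (x : RepSpace Q dx K) (y : RepSpace Q dy K)
    (φ : Carrier Q dx K →ₗ[K] Carrier Q dy K) : Prop :=
  (∀ a, φ ∘ₗ arrowMap Q dx K x a = arrowMap Q dy K y a ∘ₗ φ) ∧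
  ∀ i, φ ∘ₗ proj Q dx K i = proj Q dy K i ∘ₗ φ

/-- The submodule `N` of `M_x` is isomorphic, as a representation, to `M_y`. -/
def SubrepIso (dy : Fin Q.n → ℕ) (x : RepSpace Q d K)
    (N : Submodule K (Carrier Q d K)) (y : RepSpace Q dy K) : Prop :=
  ∃ φ : Carrier Q d K →ₗ[K] Carrier Q dy K,
    N ⊓ LinearMap.ker φ = ⊥ ∧ N.map φ = ⊤ ∧
    (∀ a, ∀ m ∈ N, φ (arrowMap Q d K x a m) = arrowMap Q dy K y a (φ m)) ∧
    (∀ i, ∀ m ∈ N, φ (proj Q d K i m) = proj Q dy K i (φ m))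

/-- The representations `M_x` and `M_y` are isomorphic; the isomorphism classes are
exactly the orbits of the `GL(d)`-action. -/
def IsoRep (x y : RepSpace Q d K) : Prop :=
  ∃ φ : Carrier Q d K ≃ₗ[K] Carrier Q d K,
    (∀ a m, φ (arrowMap Q d K x a m) = arrowMap Q d K y a (φ m)) ∧
    ∀ i m, φ (proj Q d K i m) = proj Q d K i (φ m)

/-- The `GL(d)`-orbit of the point `x`, i.e. the set of points encoding modules
isomorphic to `M_x`. -/
def orbitSet (x : RepSpace Q d K) : Set (RepSpace Q d K) :=
  {y | IsoRep Q d K x y}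

/-- Given a family `P` of varieties `Rep_dv(Λ)` (one for every dimension vector `dv`),
`Ext¹_Λ(M_x, M_y) = 0`: every extension `0 → M_y → E → M_x → 0` of `Λ`-modules splits. -/
def Ext1Zero (P : ∀ dv : Fin Q.n → ℕ, Set (RepSpace Q dv K))
    (dx dy : Fin Q.n → ℕ) (x : RepSpace Q dx K) (y : RepSpace Q dy K) : Prop :=
  ∀ z ∈ P (fun i => dx i + dy i),
    ∀ (ι : Carrier Q dy K →ₗ[K] Carrier Q (fun i => dx i + dy i) K)
      (π : Carrier Q (fun i => dx i + dy i) K →ₗ[K] Carrier Q dx K),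
      RepHom Q K dy (fun i => dx i + dy i) y z ι →
      RepHom Q K (fun i => dx i + dy i) dx z x π →
      Function.Injective ι → Function.Surjective π →
      LinearMap.ker π = LinearMap.range ι →
      ∃ σ : Carrier Q dx K →ₗ[K] Carrier Q (fun i => dx i + dy i) K,
        RepHom Q K dx (fun i => dx i + dy i) x z σ ∧ π ∘ₗ σ = LinearMap.id

/-- The direct sum `C₁ ⊕ ⋯ ⊕ C_s` of subvarieties `C_r ⊆ Rep_{D r}(Λ)`: the set of
points `x ∈ Rep_d(Λ)` whose module decomposes as `M_x ≅ ⊕_r M^{(r)}` with `M^{(r)}`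
encoded by a point of `C_r`. -/
def DirectSumSet (s : ℕ) (D : Fin s → Fin Q.n → ℕ)
    (Cs : ∀ r : Fin s, Set (RepSpace Q (D r) K)) : Set (RepSpace Q d K) :=
  {x | ∃ N : Fin s → Submodule K (Carrier Q d K),
    (∀ r, Stable Q d K x (N r)) ∧
    (∀ r, Disjoint (N r) (⨆ t, ⨆ (_ : t ≠ r), N t)) ∧
    (⨆ r, N r) = ⊤ ∧
    ∀ r, ∃ y ∈ Cs r, SubrepIso Q d K (D r) x (N r) y}

/-- The endomorphism space `End_Λ(M_x)` of the module `M_x`. -/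
def endSpace (x : RepSpace Q d K) :
    Submodule K (Carrier Q d K →ₗ[K] Carrier Q d K) where
  carrier := {φ | RepHom Q K d d x x φ}
  add_mem' := by
    intro φ ψ hφ hψ
    exact ⟨fun a => by rw [LinearMap.add_comp, LinearMap.comp_add, hφ.1 a, hψ.1 a],
      fun i => by rw [LinearMap.add_comp, LinearMap.comp_add, hφ.2 i, hψ.2 i]⟩
  zero_mem' := by
    exact ⟨fun a => by simp, fun i => by simp⟩
  smul_mem' := by
    intro c φ hφ
    exact ⟨fun a => by rw [LinearMap.smul_comp, LinearMap.comp_smul, hφ.1 a],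
      fun i => by rw [LinearMap.smul_comp, LinearMap.comp_smul, hφ.2 i]⟩

/-- A word of arrows is a (composable) path when read in function-composition order. -/
def IsPathWord (w : List (Fin Q.numArrows)) : Prop :=
  List.Chain' (fun a b => Q.src a = Q.tgt b) w

/-- The quiver `Q` has no oriented cycles. -/
def Acyclic : Prop :=
  ∀ (a : Fin Q.numArrows) (w : List (Fin Q.numArrows)),
    IsPathWord Q (a :: w) →
      Q.tgt a ≠ Q.src ((a :: w).getLast (List.cons_ne_nil a w))

/-- A filtration `M_x = F 0 ⊇ F 1 ⊇ ⋯ ⊇ F (L+1) = 0` by submodules which is governed by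
the semisimple sequence `S`: each layer `F l / F (l+1)` is semisimple, isomorphic to `S l`. -/
def Governed (L : ℕ) (x : RepSpace Q d K) (S : Fin (L+1) → Fin Q.n → ℕ)
    (F : Fin (L+2) → Submodule K (Carrier Q d K)) : Prop :=
  F 0 = ⊤ ∧ F (Fin.last (L+1)) = ⊥ ∧
  (∀ l : Fin (L+1), F l.succ ≤ F l.castSucc) ∧
  (∀ (l : Fin (L+2)) (i : Fin Q.n), (F l).map (proj Q d K i) ≤ F l) ∧
  (∀ (l : Fin (L+1)) (a : Fin Q.numArrows),
      (F l.castSucc).map (arrowMap Q d K x a) ≤ F l.succ) ∧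
  ∀ (l : Fin (L+1)) (i : Fin Q.n),
      vdim Q d K (F l.castSucc) i = S l i + vdim Q d K (F l.succ) i

/-- `Filt S`: the set of points whose module has a filtration governed by `S`. -/
def FiltSet (L : ℕ) (S : Fin (L+1) → Fin Q.n → ℕ) : Set (RepSpace Q d K) :=
  {x | ∃ F, Governed Q d K L x S F}

/-- `Γ(M_x)`: the number of semisimple sequences which are realizable (i.e. occur as the
radical layering of a module in the variety `P`) and which govern some filtration of `M_x`. -/
noncomputable def gammaCount (L : ℕ) (P : Set (RepSpace Q d K))
    (x : RepSpace Q d K) : ℕ :=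
  Set.ncard {S : Fin (L+1) → Fin Q.n → ℕ |
    (∃ y ∈ P, radLayering Q d K L y = S) ∧ ∃ F, Governed Q d K L x S F}

/-- `Sstar` is the generic (= minimal, attained) socle layering of the modules in `W`. -/
def GenSoc (L : ℕ) (W : Set (RepSpace Q d K))
    (Sstar : Fin (L+1) → Fin Q.n → ℕ) : Prop :=
  (∀ x ∈ W, dominates Sstar (socLayering Q d K L x)) ∧
  ∃ x ∈ W, socLayering Q d K L x = Sstar

end QuiverData

namespace QuiverData

variable (Q : QuiverData)

/-- The `i`-th entry of the row vector `e·A` (over `ℤ`), where `A` is the adjacency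
matrix of `Q`: the sum of `e (src a)` over all arrows `a` ending at `i`. -/
def inflowZ (e : Fin Q.n → ℤ) (i : Fin Q.n) : ℤ :=
  ∑ a ∈ Finset.univ.filter (fun a => Q.tgt a = i), e (Q.src a)

/-- The `i`-th entry of the row vector `e·B` (over `ℤ`), where `B` is the transpose of
the adjacency matrix of `Q`. -/
def outflowZ (e : Fin Q.n → ℤ) (i : Fin Q.n) : ℤ :=
  ∑ a ∈ Finset.univ.filter (fun a => Q.src a = i), e (Q.tgt a)

/-- Partial sums `t⁽⁰⁾ + ⋯ + t⁽ˡ⁾` of the recursion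
`t⁽⁰⁾ = sup{0, d − d·A}`, `t⁽ˡ⁺¹⁾ = sup{0, (d − ∑_{k≤l} t⁽ᵏ⁾) − (d − ∑_{k≤l} t⁽ᵏ⁾)·A}`
(computed componentwise). -/
def cumLayer (dz : Fin Q.n → ℤ) : ℕ → Fin Q.n → ℤ
  | 0 => fun i => max 0 (dz i - inflowZ Q dz i)
  | (l+1) => fun i =>
      cumLayer dz l i +
        max 0 ((dz i - cumLayer dz l i) -
          inflowZ Q (fun j => dz j - cumLayer dz l j) i)

/-- The positive part `∑ᵢ eᵢ fᵢ` of the Euler form of `Q`. -/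
def eulerHomPart (e f : Fin Q.n → ℕ) : ℕ := ∑ i, e i * f i

/-- The negative part `∑_{α} e_{src α} f_{tgt α}` of the Euler form of `Q`, so that
`⟨e, f⟩ = eulerHomPart e f − eulerExtPart e f`. -/
def eulerExtPart (e f : Fin Q.n → ℕ) : ℕ :=
  ∑ a, e (Q.src a) * f (Q.tgt a)

end QuiverData

/-- The quiver with a single vertex and `r` loops. -/
def QuiverData.loopQuiver (r : ℕ) : QuiverData :=
  ⟨1, r, fun _ => 0, fun _ => 0⟩

namespace QuiverData

variable (Q : QuiverData) (d : Fin Q.n → ℕ) (K : Type) [Field K]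

/-- The variety `Rep_d(Λ)` for `Λ = KQ/⟨Rels⟩`, regarded as a topological space with the
(subspace) Zariski topology. -/
abbrev GenV (Rels : Set (FreeAlgebra K (Fin Q.n ⊕ Fin Q.numArrows))) :=
  {y : RepSpace Q d K // y ∈ RepVar Q d K Rels}

/-- The variety `Rep_d(Λ)` for the truncated path algebra
`Λ = KQ/⟨paths of length L+1⟩`, regarded as a topological space. -/
abbrev TruncV (L : ℕ) := {y : RepSpace Q d K // y ∈ TruncRepVar Q d K L}

end QuiverData

/-!
Two representations `x`, `y` with the same radical layering have radical flags of equal dimensions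
at every vertex, so `y` is carried by a base change in `∏ᵢ GL(dᵢ)` to a representation `y'`
shifting the radical flag of `x`. The representations shifting a fixed flag form a linear space,
and by semicontinuity of rank a general point of the line through `x` and `y'` has the same
radical flag as `x`. Moving along this line while applying a line of base changes from `1` to the
one that takes `y'` to `y` gives a polynomial curve from `x` to `y` whose general point stays in
the stratum; hence two nonempty open subsets of the stratum always meet. Adjugates in place of
inverses keep the curve polynomial and only rescale the arrows. Finally, the finitely many
irreducible strata cover `Rep_d(Λ)`, so each irreducible component is the closure of one of them.
-/

section PolynomialCurves

open Polynomial Filter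

variable {ι R : Type*} [CommRing R]

/-- The polynomial curve `R → (ι → R)` with coordinate polynomials `Γ i`; points of affine space are
connected by such curves to show irreducibility. -/
def polyCurve (Γ : ι → R[X]) (t : R) : ι → R := fun i => (Γ i).eval t

theorem eval_polyCurve (Γ : ι → R[X]) (t : R) (p : MvPolynomial ι R) :
    MvPolynomial.eval (polyCurve Γ t) p = (MvPolynomial.aeval Γ p).eval t := by
  induction p using MvPolynomial.induction_on <;> simp_all [polyCurve]

theorem polyCurve_lineMap (x y : ι → R) (t : R) :
    polyCurve (AffineMap.lineMap (C ∘ x) (C ∘ y) (X : R[X])) t = AffineMap.lineMap x y t := by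
  ext i
  simp [polyCurve, AffineMap.lineMap_apply]

theorem map_eval_lineMap {m n : Type*} (A B : Matrix m n R) (t : R) :
    (AffineMap.lineMap (A.map C) (B.map C) (X : R[X])).map (eval t) = AffineMap.lineMap A B t := by
  ext i j
  simp [AffineMap.lineMap_apply]

theorem eventually_cofinite_eval_ne_zero [IsDomain R] {p : R[X]} {t₀ : R} (h : p.eval t₀ ≠ 0) :
    ∀ᶠ t in cofinite, p.eval t ≠ 0 := by
  have hp : p ≠ 0 := by
    rintro rfl
    exact h eval_zero
  simpa [eventually_cofinite] using finite_setOfPred_isRoot hp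

theorem eventually_det_map_eval_ne_zero [IsDomain R] {n : Type*} [Fintype n] [DecidableEq n]
    {A : Matrix n n R[X]} {t₀ : R} (h : (A.map (eval t₀)).det ≠ 0) :
    ∀ᶠ t in cofinite, (A.map (eval t)).det ≠ 0 := by
  simp only [← coe_evalRingHom, ← RingHom.mapMatrix_apply, ← RingHom.map_det] at h ⊢
  exact eventually_cofinite_eval_ne_zero h

end PolynomialCurves

section ZariskiTopology

open Polynomial Filter Topology

variable {ι R : Type} [CommRing R] [IsDomain R]

theorem eventually_polyCurve_mem {U : Set (ι → R)}
    (hU : IsOpen[zariskiTopology ι R] U) {Γ : ι → R[X]} {t₀ : R} (h : polyCurve Γ t₀ ∈ U) :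
    ∀ᶠ t in cofinite, polyCurve Γ t ∈ U := by
  induction hU with
  | basic U hU =>
    obtain ⟨p, rfl⟩ := hU
    simp only [Set.mem_ofPred_eq, eval_polyCurve] at h ⊢
    exact eventually_cofinite_eval_ne_zero h
  | univ => simp
  | inter U V _ _ ihU ihV => exact (ihU h.1).and (ihV h.2)
  | sUnion S _ ih =>
    obtain ⟨U, hUS, hU⟩ := h
    exact (ih U hUS hU).mono fun t ht => ⟨U, hUS, ht⟩

theorem isPreirreducible_of_polyCurve [Infinite R]
    {X : Type*} [TopologicalSpace X] {f : X → ι → R}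
    (hf : @IsInducing _ _ _ (zariskiTopology ι R) f) {s : Set X}
    (hs : ∀ x ∈ s, ∀ y ∈ s, ∃ Γ : ι → R[X], polyCurve Γ 0 = f x ∧ polyCurve Γ 1 = f y ∧
      ∀ᶠ t in cofinite, polyCurve Γ t ∈ f '' s) :
    IsPreirreducible s := by
  let := zariskiTopology ι R
  rintro _ _ hU hV ⟨x, hxs, hxU⟩ ⟨y, hys, hyV⟩
  obtain ⟨U, hUo, rfl⟩ := hf.isOpen_iff.1 hU
  obtain ⟨V, hVo, rfl⟩ := hf.isOpen_iff.1 hV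
  obtain ⟨Γ, h0, h1, hΓ⟩ := hs x hxs y hys
  have hΓU := eventually_polyCurve_mem hUo (t₀ := 0) (h0 ▸ hxU : polyCurve Γ 0 ∈ U)
  have hΓV := eventually_polyCurve_mem hVo (t₀ := 1) (h1 ▸ hyV : polyCurve Γ 1 ∈ V)
  obtain ⟨t, ⟨z, hzs, hz⟩, htU, htV⟩ := (hΓ.and (hΓU.and hΓV)).exists
  rw [← hz] at htU htV
  exact ⟨z, hzs, htU, htV⟩

end ZariskiTopology

theorem exists_eq_closure_fiber_of_mem_irreducibleComponents {X α : Type*} [TopologicalSpace X]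
    {f : X → α} (hf : (Set.range f).Finite) (hirr : ∀ a ∈ Set.range f, IsIrreducible (f ⁻¹' {a}))
    {C : Set X} (hC : C ∈ irreducibleComponents X) :
    ∃ a ∈ Set.range f, C = closure (f ⁻¹' {a}) := by
  have hfin : ((fun a => closure (f ⁻¹' {a})) '' Set.range f).Finite := hf.image _
  obtain ⟨_, hmem, hCa⟩ := isIrreducible_iff_sUnion_isClosed.1 hC.1 hfin.toFinset
    (by simp) (fun x _ => ⟨closure (f ⁻¹' {f x}), by simp, subset_closure rfl⟩)
  obtain ⟨a, ha, rfl⟩ := hfin.mem_toFinset.1 hmem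
  exact ⟨a, ha, hCa.antisymm (hC.2 (hirr a ha).closure hCa)⟩

section GenericRank

open Polynomial Filter Module

variable {K κ I : Type*} [Field K]

theorem exists_mul_eq_one_of_linearIndependent_row [Fintype I] [Finite κ] [DecidableEq κ]
    {A : Matrix κ I K} (hA : LinearIndependent K A.row) : ∃ B : Matrix I κ K, A * B = 1 := by
  have := Fintype.ofFinite κ
  rw [← Matrix.mulVec_surjective_iff_exists_right_inverse, ← Matrix.coe_mulVecLin,
    ← LinearMap.range_eq_top]
  exact Submodule.eq_top_of_finrank_eq (by rw [finrank_fintype_fun_eq_card, ← hA.rank_matrix]; rfl)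

theorem eventually_linearIndependent_polyCurve [Finite I] {v : κ → I → K[X]} {t₀ : K}
    (h : LinearIndependent K fun k => polyCurve (v k) t₀) :
    ∀ᶠ t in cofinite, LinearIndependent K fun k => polyCurve (v k) t := by
  classical
  have := Fintype.ofFinite I
  have := h.finite_of_isNoetherian
  have := Fintype.ofFinite κ
  obtain ⟨B, hB⟩ := exists_mul_eq_one_of_linearIndependent_row
    (A := (Matrix.of v).map (eval t₀)) h
  have heval (t : K) : (Matrix.of v * B.map C).map (eval t) = (Matrix.of v).map (eval t) * B := by
    ext
    simp [Matrix.mul_apply, eval_finsetSum]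
  have hdet : ((Matrix.of v * B.map C).map (eval t₀)).det ≠ 0 := by
    rw [heval, hB, Matrix.det_one]
    exact one_ne_zero
  filter_upwards [eventually_det_map_eval_ne_zero hdet] with t ht
  rw [heval] at ht
  exact LinearIndependent.of_comp B.vecMulLinear (Matrix.linearIndependent_rows_of_det_ne_zero ht)

theorem eventually_finrank_span_polyCurve_le [Finite I] (v : κ → I → K[X]) (t₀ : K) :
    ∀ᶠ t in cofinite, finrank K (Submodule.span K (Set.range fun k => polyCurve (v k) t₀)) ≤
      finrank K (Submodule.span K (Set.range fun k => polyCurve (v k) t)) := by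
  obtain ⟨κ', a, -, hspan, hli⟩ := exists_linearIndependent' K fun k => polyCurve (v k) t₀
  have := hli.finite_of_isNoetherian
  have := Fintype.ofFinite κ'
  filter_upwards [eventually_linearIndependent_polyCurve (v := v ∘ a) hli] with t ht
  calc finrank K (Submodule.span K (Set.range fun k => polyCurve (v k) t₀))
      = Fintype.card κ' := by rw [← hspan, finrank_span_eq_card hli]
    _ = finrank K (Submodule.span K (Set.range fun k => polyCurve (v (a k)) t)) :=
        (finrank_span_eq_card ht).symm
    _ ≤ _ := Submodule.finrank_mono <| Submodule.span_mono <|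
        Set.range_comp_subset_range a fun k => polyCurve (v k) t

end GenericRank

section Flags

open Module

theorem exists_linearEquiv_map_eq {K V : Type*} [DivisionRing K] [AddCommGroup V] [Module K V]
    {W W' : Submodule K V} [FiniteDimensional K W] (e : W ≃ₗ[K] W') :
    ∃ g : V ≃ₗ[K] V, ∀ U ≤ W, U.map g.toLinearMap =
      ((U.comap W.subtype).map e.toLinearMap).map W'.subtype := by
  obtain ⟨g, hg⟩ := Submodule.exists_linearEquiv_restrict_eq e
  have hcomp : W'.subtype ∘ₗ e.toLinearMap = g.toLinearMap ∘ₗ W.subtype := LinearMap.ext hg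
  refine ⟨g, fun U hU => ?_⟩
  rw [← Submodule.map_comp, hcomp, Submodule.map_comp, Submodule.map_comap_subtype,
    inf_eq_right.2 hU]

theorem exists_linearEquiv_map_flag_eq {K V : Type*} [DivisionRing K] [AddCommGroup V] [Module K V]
    [FiniteDimensional K V] {F G : ℕ → Submodule K V} (hF : Antitone F) (hG : Antitone G) (N : ℕ)
    (h : ∀ l < N, finrank K (F l) = finrank K (G l)) :
    ∃ e : V ≃ₗ[K] V, ∀ l < N, (F l).map e.toLinearMap = G l := by
  induction N generalizing V with
  | zero => exact ⟨.refl K V, by simp⟩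
  | succ N ih =>
    have hF0 (l) : F l ≤ F 0 := hF l.zero_le
    have hG0 (l) : G l ≤ G 0 := hG l.zero_le
    let e₀ : F 0 ≃ₗ[K] G 0 := .ofFinrankEq _ _ (h 0 N.succ_pos)
    have hfinrank (l) (hl : l < N) :
        finrank K (((F (l + 1)).comap (F 0).subtype).map e₀.toLinearMap) =
          finrank K ((G (l + 1)).comap (G 0).subtype) := by
      rw [LinearEquiv.finrank_map_eq, (Submodule.comapSubtypeEquivOfLe (hF0 _)).finrank_eq,
        (Submodule.comapSubtypeEquivOfLe (hG0 _)).finrank_eq, h _ (Nat.succ_lt_succ hl)]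
    obtain ⟨e₁, he₁⟩ := ih
      (F := fun l => ((F (l + 1)).comap (F 0).subtype).map e₀.toLinearMap)
      (G := fun l => (G (l + 1)).comap (G 0).subtype)
      (fun _ _ hlm => Submodule.map_mono <| Submodule.comap_mono <| hF <| Nat.succ_le_succ hlm)
      (fun _ _ hlm => Submodule.comap_mono <| hG <| Nat.succ_le_succ hlm) hfinrank
    obtain ⟨e, he⟩ := exists_linearEquiv_map_eq (e₀.trans e₁)
    refine ⟨e, fun l hl => ?_⟩
    rw [he _ (hF0 l), LinearEquiv.coe_trans, Submodule.map_comp]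
    cases l with
    | zero => simp
    | succ l =>
      rw [he₁ l (Nat.lt_of_succ_lt_succ hl), Submodule.map_comap_subtype, inf_eq_right.2 (hG0 _)]

end Flags

theorem sum_tsub_add_of_antitone {M : Type*} [AddCommMonoid M] [PartialOrder M]
    [CanonicallyOrderedAdd M] [Sub M] [OrderedSub M] {f : ℕ → M} (hf : Antitone f) (n : ℕ) :
    ∑ l : Fin n, (f l - f (l + 1)) + f n = f 0 := by
  induction n with
  | zero => simp
  | succ n ih =>
    rw [Fin.sum_univ_castSucc, add_assoc, Fin.val_last, tsub_add_cancel_of_le (hf n.le_succ)]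
    exact ih

theorem finite_setOf_hasDimVec (L : ℕ) {n : ℕ} (d : Fin n → ℕ) :
    {S : Fin (L + 1) → Fin n → ℕ | hasDimVec S d}.Finite :=
  (Set.finite_Iic fun _ => d).subset fun S hS l i =>
    (single_le_sum (f := fun l => S l i) (fun _ _ => Nat.zero_le _) (mem_univ l)).trans_eq (hS i)

namespace QuiverData

open Module Matrix

variable {Q : QuiverData} {d : Fin Q.n → ℕ} {L : ℕ}

/-- The matrix of the arrow `a` in the representation `x`, whose entries may lie in any type `R`,
such as the polynomial ring when `x` is a curve of representations. -/
def arrowMatrix {R : Type*} (x : Coords Q d → R) (a : Fin Q.numArrows) :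
    Matrix (Fin (d (Q.tgt a))) (Fin (d (Q.src a))) R :=
  of fun p q => x ⟨a, p, q⟩

theorem ext_arrowMatrix {R : Type*} {x y : Coords Q d → R}
    (h : ∀ a, arrowMatrix x a = arrowMatrix y a) : x = y :=
  funext fun ⟨a, p, q⟩ => congrFun₂ (h a) p q

variable {K : Type} [Field K]

/-- The component at the vertex `i` of an element of `⊕ᵢ K^{dᵢ}`. -/
def component (i : Fin Q.n) : Carrier Q d K →ₗ[K] Fin (d i) → K :=
  LinearMap.funLeft K K (Sigma.mk (β := fun i => Fin (d i)) i)

/-- The inclusion of the summand at the vertex `i` in `⊕ᵢ K^{dᵢ}`. -/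
noncomputable def inclusion (i : Fin Q.n) : (Fin (d i) → K) →ₗ[K] Carrier Q d K :=
  Function.ExtendByZero.linearMap K (Sigma.mk (β := fun i => Fin (d i)) i)

theorem component_inclusion_self (i : Fin Q.n) (v : Fin (d i) → K) :
    component i (inclusion i v) = v :=
  funext fun p => (sigma_mk_injective (β := fun i => Fin (d i))).extend_apply v 0 p

theorem component_inclusion_of_ne {i j : Fin Q.n} (h : i ≠ j) (v : Fin (d j) → K) :
    component i (inclusion j v) = 0 := by
  funext p
  exact Function.extend_apply' _ _ _ fun ⟨q, hq⟩ => h (congrArg Sigma.fst hq).symm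

theorem component_surjective (i : Fin Q.n) :
    Function.Surjective (component (d := d) (K := K) i) :=
  Function.LeftInverse.surjective (component_inclusion_self i)

theorem inclusion_injective (i : Fin Q.n) : Function.Injective (inclusion (d := d) (K := K) i) :=
  Function.LeftInverse.injective (component_inclusion_self i)

theorem carrier_ext {m m' : Carrier Q d K} (h : ∀ i, component i m = component i m') : m = m' :=
  funext fun ⟨i, p⟩ => congrFun (h i) p

theorem proj_eq_inclusion_comp_component (i : Fin Q.n) :
    proj Q d K i = inclusion i ∘ₗ component i := by
  refine LinearMap.ext fun m => carrier_ext fun j => ?_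
  rcases eq_or_ne j i with rfl | h
  · rw [LinearMap.comp_apply, component_inclusion_self]
    ext p
    simp [proj, component]
  · rw [LinearMap.comp_apply, component_inclusion_of_ne h]
    ext p
    simp [proj, component, h]

theorem component_tgt_arrowMap (x : RepSpace Q d K) (a : Fin Q.numArrows) (m : Carrier Q d K) :
    component (Q.tgt a) (arrowMap Q d K x a m) = arrowMatrix x a *ᵥ component (Q.src a) m := by
  ext p
  simp [component, arrowMap, arrowMatrix, mulVec, dotProduct]

theorem component_arrowMap_of_ne (x : RepSpace Q d K) {a : Fin Q.numArrows} {i : Fin Q.n}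
    (h : i ≠ Q.tgt a) (m : Carrier Q d K) : component i (arrowMap Q d K x a m) = 0 := by
  ext p
  simp [component, arrowMap, h]

theorem radPow_zero (x : RepSpace Q d K) : radPow Q d K x 0 = ⊤ :=
  top_unique <| le_iSup_of_le ⟨[], rfl⟩ LinearMap.range_id.ge

theorem radPow_succ (x : RepSpace Q d K) (l : ℕ) :
    radPow Q d K x (l + 1) = ⨆ a, (radPow Q d K x l).map (arrowMap Q d K x a) := by
  have hcons (a) (w) : LinearMap.range (wordMap Q d K x (a :: w)) =
      (LinearMap.range (wordMap Q d K x w)).map (arrowMap Q d K x a) := by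
    rw [← LinearMap.range_comp]
    simp [wordMap, Module.End.mul_eq_comp]
  refine le_antisymm (iSup_le ?_) (iSup_le fun a => ?_)
  · rintro ⟨_ | ⟨a, w⟩, hw⟩
    · simp at hw
    rw [hcons]
    exact le_iSup_of_le a <| Submodule.map_mono <|
      le_iSup_of_le ⟨w, Nat.succ_injective hw⟩ le_rfl
  · simp only [radPow, Submodule.map_iSup]
    refine iSup_le fun ⟨w, hw⟩ => ?_
    rw [← hcons]
    exact le_iSup_of_le ⟨a :: w, congrArg Nat.succ hw⟩ le_rfl

theorem radPow_antitone (x : RepSpace Q d K) : Antitone (radPow Q d K x) := by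
  refine antitone_nat_of_succ_le fun l => ?_
  induction l with
  | zero => simp [radPow_zero]
  | succ l ih =>
    rw [radPow_succ x l, radPow_succ x (l + 1)]
    exact iSup_mono fun a => Submodule.map_mono ih

theorem mem_truncRepVar_iff {x : RepSpace Q d K} :
    x ∈ TruncRepVar Q d K L ↔ radPow Q d K x (L + 1) = ⊥ := by
  simp [TruncRepVar, radPow, LinearMap.range_eq_bot]

/-- The part `eᵢ J^l M_x` of the radical power `J^l M_x` at the vertex `i`, as a subspace of
`K^{dᵢ}`. -/
noncomputable def radAt (x : RepSpace Q d K) (l : ℕ) (i : Fin Q.n) : Submodule K (Fin (d i) → K) :=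
  (radPow Q d K x l).map (component i)

theorem radAt_zero (x : RepSpace Q d K) (i : Fin Q.n) : radAt x 0 i = ⊤ := by
  rw [radAt, radPow_zero, Submodule.map_top, LinearMap.range_eq_top.2 (component_surjective i)]

theorem radAt_antitone (x : RepSpace Q d K) : Antitone (radAt x) :=
  fun _ _ h _ => Submodule.map_mono (radPow_antitone x h)

theorem finrank_radAt (x : RepSpace Q d K) (l : ℕ) (i : Fin Q.n) :
    finrank K (radAt x l i) = vdim Q d K (radPow Q d K x l) i := by
  rw [vdim, proj_eq_inclusion_comp_component, Submodule.map_comp]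
  exact (Submodule.equivMapOfInjective _ (inclusion_injective i) _).finrank_eq

theorem mem_truncRepVar_iff_radAt {x : RepSpace Q d K} :
    x ∈ TruncRepVar Q d K L ↔ ∀ i, radAt x (L + 1) i = ⊥ := by
  rw [mem_truncRepVar_iff]
  refine ⟨fun h i => by rw [radAt, h, Submodule.map_bot], fun h => eq_bot_iff.2 fun m hm => ?_⟩
  refine (Submodule.mem_bot K).2 <| carrier_ext fun i => ?_
  rw [map_zero, ← Submodule.mem_bot K, ← h i]
  exact Submodule.mem_map_of_mem hm

theorem radAt_eq_bot {x : RepSpace Q d K} {l : ℕ} (hx : x ∈ TruncRepVar Q d K L) (hl : L < l)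
    (i : Fin Q.n) : radAt x l i = ⊥ :=
  eq_bot_mono (radAt_antitone x hl i) (mem_truncRepVar_iff_radAt.1 hx i)

theorem mem_truncRepVar_of_finrank_radAt_eq {x y : RepSpace Q d K}
    (hx : x ∈ TruncRepVar Q d K L)
    (h : ∀ l i, finrank K (radAt y l i) = finrank K (radAt x l i)) : y ∈ TruncRepVar Q d K L :=
  mem_truncRepVar_iff_radAt.2 fun i => Submodule.finrank_eq_zero.1 <| by
    rw [h, radAt_eq_bot hx L.lt_succ_self, finrank_bot]

theorem arrowMatrix_add (x y : RepSpace Q d K) (a : Fin Q.numArrows) :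
    arrowMatrix (x + y) a = arrowMatrix x a + arrowMatrix y a := rfl

theorem arrowMatrix_smul (c : K) (x : RepSpace Q d K) (a : Fin Q.numArrows) :
    arrowMatrix (c • x) a = c • arrowMatrix x a := rfl

/-- The linear space of representations whose arrows send the step `F l` of the vertex-graded flag
`F` into the step `F (l + 1)`. The radical flag of `x` is the smallest flag that `x` shifts. -/
def flagShifting (F : ℕ → ∀ i, Submodule K (Fin (d i) → K)) : Submodule K (RepSpace Q d K) where
  carrier := {x | ∀ a l, ∀ v ∈ F l (Q.src a), arrowMatrix x a *ᵥ v ∈ F (l + 1) (Q.tgt a)}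
  add_mem' hx hy a l v hv := by
    rw [arrowMatrix_add, add_mulVec]
    exact add_mem (hx a l v hv) (hy a l v hv)
  zero_mem' a l v _ := by
    rw [← zero_smul K (0 : RepSpace Q d K), arrowMatrix_smul, zero_smul, zero_mulVec]
    exact zero_mem _
  smul_mem' c x hx a l v hv := by
    rw [arrowMatrix_smul, smul_mulVec]
    exact Submodule.smul_mem _ c (hx a l v hv)

theorem mem_flagShifting_radAt (x : RepSpace Q d K) : x ∈ flagShifting (radAt x) := by
  rintro a l _ ⟨m, hm, rfl⟩
  rw [← component_tgt_arrowMap]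
  refine Submodule.mem_map_of_mem ?_
  rw [radPow_succ]
  exact Submodule.mem_iSup_of_mem a (Submodule.mem_map_of_mem hm)

theorem radAt_le_of_mem_flagShifting {F : ℕ → ∀ i, Submodule K (Fin (d i) → K)}
    {x : RepSpace Q d K} (h0 : ∀ i, F 0 i = ⊤) (hx : x ∈ flagShifting F) (l : ℕ) (i : Fin Q.n) :
    radAt x l i ≤ F l i := by
  induction l generalizing i with
  | zero => simp [h0]
  | succ l ih =>
    simp only [radAt, radPow_succ, Submodule.map_iSup, iSup_le_iff, Submodule.map_le_iff_le_comap]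
    intro a m hm
    rcases eq_or_ne i (Q.tgt a) with rfl | h
    · simpa only [Submodule.mem_comap, component_tgt_arrowMap] using
        hx a l _ (ih _ (Submodule.mem_map_of_mem hm))
    · simp [component_arrowMap_of_ne x h]

theorem finrank_radAt_eq_radLayering_add (x : RepSpace Q d K) (l : Fin (L + 1))
    (i : Fin Q.n) :
    finrank K (radAt x l i) = radLayering Q d K L x l i + finrank K (radAt x (l + 1) i) := by
  simp only [radLayering, ← finrank_radAt]
  exact (Nat.sub_add_cancel (Submodule.finrank_mono (radAt_antitone x l.1.le_succ i))).symm

theorem radLayering_eq_iff {x y : RepSpace Q d K} (hx : x ∈ TruncRepVar Q d K L)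
    (hy : y ∈ TruncRepVar Q d K L) :
    radLayering Q d K L x = radLayering Q d K L y ↔
      ∀ l i, finrank K (radAt x l i) = finrank K (radAt y l i) := by
  refine ⟨fun h l i => ?_, fun h => ?_⟩
  · induction l with
    | zero => rw [radAt_zero, radAt_zero]
    | succ l ih =>
      rcases lt_or_ge l (L + 1) with hl | hl
      · have hxl := finrank_radAt_eq_radLayering_add x ⟨l, hl⟩ i
        have hyl := finrank_radAt_eq_radLayering_add y ⟨l, hl⟩ i
        rw [h] at hxl
        exact Nat.add_left_cancel (hxl.symm.trans (ih.trans hyl))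
      · have hl' : L < l + 1 := by lia
        rw [radAt_eq_bot hx hl', radAt_eq_bot hy hl']
  · funext l i
    simp only [radLayering, ← finrank_radAt, h]

theorem hasDimVec_radLayering {x : RepSpace Q d K} (hx : x ∈ TruncRepVar Q d K L) :
    hasDimVec (radLayering Q d K L x) d := by
  intro i
  have htel := sum_tsub_add_of_antitone (f := fun l => finrank K (radAt x l i))
    (fun _ _ h => Submodule.finrank_mono (radAt_antitone x h i)) (L + 1)
  rw [radAt_eq_bot hx L.lt_succ_self, radAt_zero, finrank_bot, add_zero, finrank_top,
    finrank_fin_fun] at htel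
  simpa only [radLayering, finrank_radAt] using htel

open Polynomial Filter

theorem exists_polyCurve_eq_wordMap (Z : Coords Q d → K[X]) (w : List (Fin Q.numArrows))
    (m : Carrier Q d K) :
    ∃ v : (Σ i, Fin (d i)) → K[X], ∀ t, wordMap Q d K (polyCurve Z t) w m = polyCurve v t := by
  induction w with
  | nil => exact ⟨fun j => C (m j), fun t => by ext; simp [wordMap, polyCurve]⟩
  | cons a w ih =>
    obtain ⟨v, hv⟩ := ih
    refine ⟨fun j => if h : j.1 = Q.tgt a then
      ∑ q, Z ⟨a, Fin.cast (congrArg d h) j.2, q⟩ * v ⟨Q.src a, q⟩ else 0, fun t => ?_⟩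
    have hcons : wordMap Q d K (polyCurve Z t) (a :: w) m =
        arrowMap Q d K (polyCurve Z t) a (polyCurve v t) := by
      rw [← hv]
      simp [wordMap]
    rw [hcons]
    ext j
    by_cases h : j.1 = Q.tgt a <;> simp [arrowMap, polyCurve, eval_finsetSum, h]

theorem radAt_eq_span (x : RepSpace Q d K) (l : ℕ) (i : Fin Q.n) :
    radAt x l i = Submodule.span K (Set.range
      fun k : {w : List (Fin Q.numArrows) // w.length = l} × Carrier Q d K =>
        component i (wordMap Q d K x k.1 k.2)) := by
  refine le_antisymm ?_ (Submodule.span_le.2 ?_)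
  · simp only [radAt, radPow, Submodule.map_iSup, iSup_le_iff]
    rintro w _ ⟨_, ⟨m, rfl⟩, rfl⟩
    exact Submodule.subset_span ⟨(w, m), rfl⟩
  · rintro _ ⟨⟨w, m⟩, rfl⟩
    exact Submodule.mem_map_of_mem (Submodule.mem_iSup_of_mem w (LinearMap.mem_range_self _ m))

theorem eventually_finrank_radAt_le (Z : Coords Q d → K[X]) (t₀ : K) (l : ℕ) (i : Fin Q.n) :
    ∀ᶠ t in cofinite, finrank K (radAt (polyCurve Z t₀ : RepSpace Q d K) l i) ≤
      finrank K (radAt (polyCurve Z t : RepSpace Q d K) l i) := by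
  choose v hv using exists_polyCurve_eq_wordMap (K := K) Z
  have hspan (t : K) : radAt (polyCurve Z t : RepSpace Q d K) l i = Submodule.span K (Set.range
      fun k : {w : List (Fin Q.numArrows) // w.length = l} × Carrier Q d K =>
        polyCurve (fun p => v k.1 k.2 ⟨i, p⟩) t) := by
    simp only [radAt_eq_span, hv]
    rfl
  exact (eventually_finrank_span_polyCurve_le _ t₀).mono fun t ht => by rwa [hspan t₀, hspan t]

section AdjugateConj

variable {R : Type*} [CommRing R]

/-- The base change of the representation `x` by matrices `h i`, with `(h i)⁻¹` replaced by the
adjugate of `h i`. This is polynomial in `h`, and for invertible `h` it differs from the action of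
`∏ᵢ GL(dᵢ)` only by rescaling each arrow `a` by the unit `det (h (src a))`. -/
def adjugateConj (h : ∀ i, Matrix (Fin (d i)) (Fin (d i)) R) (x : Coords Q d → R) :
    Coords Q d → R :=
  fun c => (h (Q.tgt c.1) * arrowMatrix x c.1 * (h (Q.src c.1)).adjugate) c.2.1 c.2.2

theorem arrowMatrix_adjugateConj (h : ∀ i, Matrix (Fin (d i)) (Fin (d i)) R) (x : Coords Q d → R)
    (a : Fin Q.numArrows) :
    arrowMatrix (adjugateConj h x) a =
      h (Q.tgt a) * arrowMatrix x a * (h (Q.src a)).adjugate := rfl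

theorem adjugateConj_one (x : Coords Q d → R) : adjugateConj 1 x = x :=
  ext_arrowMatrix fun a => by simp [arrowMatrix_adjugateConj]

theorem adjugateConj_mul (g h : ∀ i, Matrix (Fin (d i)) (Fin (d i)) R) (x : Coords Q d → R) :
    adjugateConj (g * h) x = adjugateConj g (adjugateConj h x) :=
  ext_arrowMatrix fun a => by
    simp only [arrowMatrix_adjugateConj, Pi.mul_apply, adjugate_mul_distrib, Matrix.mul_assoc]

theorem arrowMatrix_polyCurve (Z : Coords Q d → R[X]) (t : R) (a : Fin Q.numArrows) :
    arrowMatrix (polyCurve Z t) a = (arrowMatrix Z a).map (eval t) := rfl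

theorem polyCurve_adjugateConj (H : ∀ i, Matrix (Fin (d i)) (Fin (d i)) R[X])
    (Z : Coords Q d → R[X]) (t : R) :
    polyCurve (adjugateConj H Z) t =
      adjugateConj (fun i => (H i).map (eval t)) (polyCurve Z t) :=
  ext_arrowMatrix fun a => by
    simp only [arrowMatrix_adjugateConj, arrowMatrix_polyCurve, ← coe_evalRingHom,
      Matrix.map_mul, ← RingHom.mapMatrix_apply, RingHom.map_adjugate]

end AdjugateConj

theorem adjugateConj_mem_flagShifting {F : ℕ → ∀ i, Submodule K (Fin (d i) → K)}
    {h : ∀ i, Matrix (Fin (d i)) (Fin (d i)) K} {x : RepSpace Q d K}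
    (hx : x ∈ flagShifting F) :
    adjugateConj h x ∈ flagShifting fun l i => (F l i).map (h i).mulVecLin := by
  rintro a l _ ⟨v, hv, rfl⟩
  refine ⟨(h (Q.src a)).det • arrowMatrix x a *ᵥ v, Submodule.smul_mem _ _ (hx a l v hv), ?_⟩
  simp only [arrowMatrix_adjugateConj, mulVecLin_apply, mulVec_mulVec, Matrix.mul_assoc,
    adjugate_mul, mulVec_smul, Matrix.mul_smul, Matrix.mul_one, smul_mulVec]

theorem radAt_adjugateConj_le {h : ∀ i, Matrix (Fin (d i)) (Fin (d i)) K}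
    (hh : ∀ i, (h i).det ≠ 0) (x : RepSpace Q d K) (l : ℕ) (i : Fin Q.n) :
    radAt (adjugateConj h x : RepSpace Q d K) l i ≤ (radAt x l i).map (h i).mulVecLin := by
  refine radAt_le_of_mem_flagShifting (fun i => ?_)
    (adjugateConj_mem_flagShifting (mem_flagShifting_radAt x)) l i
  rw [radAt_zero, Submodule.map_top, LinearMap.range_eq_top]
  exact mulVec_surjective_iff_isUnit.2 ((isUnit_iff_isUnit_det _).2 (hh i).isUnit)

theorem radAt_adjugateConj {h : ∀ i, Matrix (Fin (d i)) (Fin (d i)) K}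
    (hh : ∀ i, (h i).det ≠ 0) (x : RepSpace Q d K) (l : ℕ) (i : Fin Q.n) :
    radAt (adjugateConj h x : RepSpace Q d K) l i = (radAt x l i).map (h i).mulVecLin := by
  refine (radAt_adjugateConj_le hh x l i).antisymm ?_
  have hmul : (fun i => (h i)⁻¹) * h = 1 :=
    funext fun i => nonsing_inv_mul _ (hh i).isUnit
  have hinv (i) : ((h i)⁻¹).det ≠ 0 := by
    rw [det_nonsing_inv]
    exact (hh i).isUnit.ringInverse.ne_zero
  have hle := radAt_adjugateConj_le hinv (adjugateConj h x) l i
  rw [← adjugateConj_mul, hmul, adjugateConj_one] at hle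
  have := Submodule.map_mono (f := (h i).mulVecLin) hle
  rwa [← Submodule.map_comp, ← mulVecLin_mul, mul_nonsing_inv _ (hh i).isUnit, mulVecLin_one,
    Submodule.map_id] at this

theorem finrank_radAt_adjugateConj {h : ∀ i, Matrix (Fin (d i)) (Fin (d i)) K}
    (hh : ∀ i, (h i).det ≠ 0) (x : RepSpace Q d K) (l : ℕ) (i : Fin Q.n) :
    finrank K (radAt (adjugateConj h x : RepSpace Q d K) l i) = finrank K (radAt x l i) := by
  have hinj : Function.Injective (h i).mulVecLin :=
    mulVec_injective_iff_isUnit.2 ((isUnit_iff_isUnit_det _).2 (hh i).isUnit)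
  rw [radAt_adjugateConj hh]
  exact (Submodule.equivMapOfInjective _ hinj _).finrank_eq.symm

theorem eventually_radAt_lineMap_eq {x y : RepSpace Q d K} (hx : x ∈ TruncRepVar Q d K L)
    (hy : y ∈ flagShifting (radAt x)) :
    ∀ᶠ t in cofinite, radAt (AffineMap.lineMap (k := K) x y t : RepSpace Q d K) = radAt x := by
  have hle (t : K) (l i) :
      radAt (AffineMap.lineMap (k := K) x y t : RepSpace Q d K) l i ≤ radAt x l i := by
    refine radAt_le_of_mem_flagShifting (radAt_zero x) ?_ l i
    rw [AffineMap.lineMap_apply_module]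
    exact add_mem (Submodule.smul_mem _ _ (mem_flagShifting_radAt x)) (Submodule.smul_mem _ _ hy)
  have hge (l i) : ∀ᶠ t in cofinite, finrank K (radAt x l i) ≤
      finrank K (radAt (AffineMap.lineMap (k := K) x y t : RepSpace Q d K) l i) := by
    filter_upwards [eventually_finrank_radAt_le
      (AffineMap.lineMap (C ∘ x) (C ∘ y) (X : K[X])) 0 l i] with t ht
    rwa [polyCurve_lineMap, polyCurve_lineMap, AffineMap.lineMap_apply_zero] at ht
  filter_upwards [eventually_all.2 fun l : Fin (L + 1) => eventually_all.2 (hge l)] with t ht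
  funext l i
  rcases lt_or_ge l (L + 1) with hl | hl
  · exact Submodule.eq_of_le_of_finrank_le (hle t l i) (ht ⟨l, hl⟩ i)
  · rw [radAt_eq_bot hx hl]
    exact eq_bot_mono (hle t l i) (radAt_eq_bot hx hl i)

theorem exists_mem_flagShifting_adjugateConj_eq {x y : RepSpace Q d K}
    (hx : x ∈ TruncRepVar Q d K L) (hy : y ∈ TruncRepVar Q d K L)
    (h : ∀ l i, finrank K (radAt y l i) = finrank K (radAt x l i)) :
    ∃ (g : ∀ i, Matrix (Fin (d i)) (Fin (d i)) K) (y' : RepSpace Q d K),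
      y' ∈ flagShifting (radAt x) ∧ adjugateConj g y' = y := by
  choose e he using fun i => exists_linearEquiv_map_flag_eq
    (fun _ _ hlm => radAt_antitone y hlm i) (fun _ _ hlm => radAt_antitone x hlm i) (L + 1)
    fun l _ => h l i
  let g := fun i => LinearMap.toMatrix' (e i).symm.toLinearMap
  let g' := fun i => LinearMap.toMatrix' (e i).toLinearMap
  have hgg' (i) : g i * g' i = 1 := by
    rw [← LinearMap.toMatrix'_comp, LinearEquiv.symm_comp, LinearMap.toMatrix'_id]
  have hflag : (fun l i => (radAt y l i).map (g' i).mulVecLin) = radAt x := by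
    funext l i
    rw [← toLin'_apply', toLin'_toMatrix']
    rcases lt_or_ge l (L + 1) with hl | hl
    · exact he i l hl
    · rw [radAt_eq_bot hy hl, radAt_eq_bot hx hl, Submodule.map_bot]
  refine ⟨g, adjugateConj g' y, ?_, ?_⟩
  · rw [← hflag]
    exact adjugateConj_mem_flagShifting (mem_flagShifting_radAt y)
  · rw [← adjugateConj_mul, show g * g' = 1 from funext hgg', adjugateConj_one]

theorem exists_polyCurve_of_finrank_radAt_eq {x y : RepSpace Q d K}
    (hx : x ∈ TruncRepVar Q d K L) (hy : y ∈ TruncRepVar Q d K L)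
    (h : ∀ l i, finrank K (radAt y l i) = finrank K (radAt x l i)) :
    ∃ Γ : Coords Q d → K[X], polyCurve Γ 0 = x ∧ polyCurve Γ 1 = y ∧
      ∀ᶠ t in cofinite, ∀ l i,
        finrank K (radAt (polyCurve Γ t : RepSpace Q d K) l i) = finrank K (radAt x l i) := by
  obtain ⟨g, y', hy', rfl⟩ := exists_mem_flagShifting_adjugateConj_eq hx hy h
  let H := fun i => AffineMap.lineMap ((1 : Matrix (Fin (d i)) (Fin (d i)) K).map C)
    ((g i).map C) (X : K[X])
  have hΓ (t : K) : polyCurve (adjugateConj H (AffineMap.lineMap (C ∘ x) (C ∘ y') (X : K[X]))) t =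
      adjugateConj (fun i => (H i).map (eval t)) (AffineMap.lineMap x y' t) := by
    rw [polyCurve_adjugateConj, polyCurve_lineMap]
  have hH0 (i) : (H i).map (eval 0) = 1 := by rw [map_eval_lineMap, AffineMap.lineMap_apply_zero]
  have hH1 (i) : (H i).map (eval 1) = g i := by rw [map_eval_lineMap, AffineMap.lineMap_apply_one]
  refine ⟨_, (hΓ 0).trans ?_, (hΓ 1).trans ?_, ?_⟩
  · simp only [hH0, AffineMap.lineMap_apply_zero]
    exact adjugateConj_one x
  · simp only [hH1, AffineMap.lineMap_apply_one]
  · have hdet : ∀ᶠ t in cofinite, ∀ i, ((H i).map (eval t)).det ≠ 0 :=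
      eventually_all.2 fun i => eventually_det_map_eval_ne_zero (t₀ := 0) (by simp [hH0])
    filter_upwards [hdet, eventually_radAt_lineMap_eq hx hy'] with t hdet hline l i
    rw [hΓ, finrank_radAt_adjugateConj hdet, hline]

theorem isPreirreducible_setOf_radLayering_eq [Infinite K] (S : Fin (L + 1) → Fin Q.n → ℕ) :
    IsPreirreducible {x : TruncV Q d K L | radLayering Q d K L x.1 = S} := by
  refine isPreirreducible_of_polyCurve (f := Subtype.val) Topology.IsInducing.subtypeVal ?_
  rintro ⟨x, hx⟩ rfl ⟨y, hy⟩ hyx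
  obtain ⟨Γ, h0, h1, hΓ⟩ := exists_polyCurve_of_finrank_radAt_eq hx hy
    ((radLayering_eq_iff hy hx).1 hyx)
  refine ⟨Γ, h0, h1, hΓ.mono fun t ht => ?_⟩
  have hmem := mem_truncRepVar_of_finrank_radAt_eq hx ht
  exact ⟨⟨polyCurve Γ t, hmem⟩, (radLayering_eq_iff hmem hx).2 ht, rfl⟩

end QuiverData

open QuiverData in
theorem statement_9_general (K : Type) [Field K] [Infinite K]
    (Q : QuiverData) (L : ℕ) (d : Fin Q.n → ℕ) :
    (∀ S : Fin (L + 1) → Fin Q.n → ℕ,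
      ({x : TruncV Q d K L | radLayering Q d K L x.1 = S}).Nonempty →
      IsIrreducible {x : TruncV Q d K L | radLayering Q d K L x.1 = S}) ∧
    ∀ C ∈ irreducibleComponents (TruncV Q d K L),
      ∃ S : Fin (L + 1) → Fin Q.n → ℕ, hasDimVec S d ∧
        ({x : TruncV Q d K L | radLayering Q d K L x.1 = S}).Nonempty ∧
        C = closure {x : TruncV Q d K L | radLayering Q d K L x.1 = S} := by
  have hirr (S) (hS : ({x : TruncV Q d K L | radLayering Q d K L x.1 = S}).Nonempty) :
      IsIrreducible {x : TruncV Q d K L | radLayering Q d K L x.1 = S} :=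
    ⟨hS, isPreirreducible_setOf_radLayering_eq S⟩
  refine ⟨hirr, fun C hC => ?_⟩
  have hfinite : (Set.range fun x : TruncV Q d K L => radLayering Q d K L x.1).Finite :=
    (finite_setOf_hasDimVec L d).subset <| Set.range_subset_iff.2 fun x =>
      hasDimVec_radLayering x.2
  obtain ⟨_, ⟨x, rfl⟩, hCx⟩ :=
    exists_eq_closure_fiber_of_mem_irreducibleComponents hfinite (fun S hS => hirr S hS) hC
  exact ⟨_, hasDimVec_radLayering x.2, ⟨x, rfl⟩, hCx⟩

open QuiverData in
/-- For a truncated path algebra `Λ = KQ/⟨paths of length L+1⟩`: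
every nonempty stratum `Rep S` (points with radical layering `S`) is irreducible, and
every irreducible component of `Rep_d(Λ)` is the closure of `Rep S` for some realizable
`d`-dimensional semisimple sequence `S`. -/
theorem statement_9 (K : Type) [Field K] [IsAlgClosed K]
    (Q : QuiverData) (L : ℕ) (hL : 0 < L) (d : Fin Q.n → ℕ) :
    (∀ S : Fin (L+1) → Fin Q.n → ℕ, hasDimVec S d →
      ({x : TruncV Q d K L | radLayering Q d K L x.1 = S}).Nonempty →
      IsIrreducible {x : TruncV Q d K L | radLayering Q d K L x.1 = S}) ∧
    ∀ C ∈ irreducibleComponents (TruncV Q d K L),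
      ∃ S : Fin (L+1) → Fin Q.n → ℕ, hasDimVec S d ∧
        ({x : TruncV Q d K L | radLayering Q d K L x.1 = S}).Nonempty ∧
        C = closure {x : TruncV Q d K L | radLayering Q d K L x.1 = S} :=
  (statement_9_general K Q L d).imp_left fun h S _ => h S
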